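/- Let d ≥ 3 and 1 ≤ k ≤ d−1 be integers and ν < 0. For n ∈ ℕ^d define Q_{d−k,d}(n) = Σ_{F⊆{1,…,d−k}} Π_{l∈{1,…,d}∖F} n_l, where the sum is over all subsets F of {1,…,d−k} (including the empty set). Then lim_{a→∞} [Σ_{n∈ℕ^d} (Π_{i=1}^d a^{n_i}/n_i!) exp(ν · Q_{d−k,d}(n))] / [Σ_{n∈ℕ^d} (Π_{i=1}^d a^{n_i}/n_i!) exp(ν · n_1 n_2 ⋯ n_d)] = k/d. -/

import Mathlib

open Filter

/-!
Up to the factor `exp (d * a)`, both series are expectations of `exp (ν * Q)` over independent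
Poisson variables of mean `a`, where `Q` is the product of the factors `n l + 1` for `l ∈ S` and
`n l` for `l ∉ S`, with `S = {1, …, d - k}` in the numerator and `S = ∅` in the denominator.

`Q` vanishes as soon as one of the coordinates outside `S` does, which has probability
`1 - (1 - exp (-a)) ^ #Sᶜ ∼ #Sᶜ * exp (-a)`. Otherwise `Q ≥ max 1 (n i) * max 1 (n j)` for any
`i ≠ j`, and this contributes only `o(exp (-a))`: a bounded coordinate has probability
`O(poly(a) * exp (-a))` and the other one still gives exponential decay, while if both are at
least `2 * M` then `n i * n j ≥ M * (n i + n j)` with `M` as large as we like. So the ratio tends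
to `#Sᶜ / d`, where `#Sᶜ = k`.
-/

section FacetEnergy

open Finset

variable {ι : Type*} [Fintype ι] [DecidableEq ι]

/-- The polynomial `Q_{d-k,d}` of the facet model, for an arbitrary finite index type `ι` in place
of `{1, …, d}` and an arbitrary `S ⊆ ι` in place of `{1, …, d - k}`. -/
def facetEnergy (S : Finset ι) (n : ι → ℕ) : ℝ :=
  ∑ F ∈ S.powerset, ∏ l ∈ univ \ F, (n l : ℝ)

theorem facetEnergy_empty (n : ι → ℕ) : facetEnergy ∅ n = ∏ l, (n l : ℝ) := by
  simp [facetEnergy]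

theorem facetEnergy_eq_prod (S : Finset ι) (n : ι → ℕ) :
    facetEnergy S n = ((∏ l, ((if l ∈ S then 1 else 0) + n l) : ℕ) : ℝ) := by
  have powerset_eq : S.powerset = univ.filter (· ⊆ S) := by ext; simp
  push_cast
  simp only [Fintype.prod_add, prod_boole, ite_mul, one_mul, zero_mul, ← sum_filter, facetEnergy,
    powerset_eq, compl_eq_univ_sdiff, subset_iff]

theorem facetEnergy_eq_zero {S : Finset ι} {n : ι → ℕ} {l : ι} (hl : l ∉ S) (hnl : n l = 0) :
    facetEnergy S n = 0 := by
  rw [facetEnergy_eq_prod, Nat.cast_eq_zero]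
  exact prod_eq_zero (mem_univ l) (by simp [hl, hnl])

theorem max_one_mul_max_one_le_facetEnergy {S : Finset ι} {n : ι → ℕ} {i j : ι} (hij : i ≠ j)
    (hn : ∀ l ∉ S, n l ≠ 0) :
    ((max 1 (n i) * max 1 (n j) : ℕ) : ℝ) ≤ facetEnergy S n := by
  rw [facetEnergy_eq_prod, Nat.cast_le]
  calc max 1 (n i) * max 1 (n j) = ∏ l ∈ {i, j}, max 1 (n l) :=
        (prod_pair (f := fun l ↦ max 1 (n l)) hij).symm
    _ ≤ ∏ l, max 1 (n l) :=
        prod_le_prod_of_subset_of_one_le' (subset_univ _) fun l _ _ ↦ le_max_left 1 (n l)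
    _ ≤ ∏ l, ((if l ∈ S then 1 else 0) + n l) := prod_le_prod' fun l _ ↦ by
        have := hn l
        split_ifs <;> grind

theorem facetEnergy_nonneg (S : Finset ι) (n : ι → ℕ) : 0 ≤ facetEnergy S n := by
  unfold facetEnergy
  positivity

theorem exp_mul_facetEnergy_mem_Icc {ν : ℝ} (hν : ν ≤ 0) (S : Finset ι) (n : ι → ℕ) :
    Real.exp (ν * facetEnergy S n) ∈ Set.Icc 0 1 :=
  ⟨(Real.exp_pos _).le,
    Real.exp_le_one_iff.2 (mul_nonpos_of_nonpos_of_nonneg hν (facetEnergy_nonneg S n))⟩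

theorem indicator_le_exp_mul_facetEnergy (ν : ℝ) (S : Finset ι) (n : ι → ℕ) :
    Set.indicator {n | ∃ l ∉ S, n l = 0} 1 n ≤ Real.exp (ν * facetEnergy S n) := by
  refine Set.indicator_apply_le' (fun ⟨l, hl, hnl⟩ ↦ ?_) fun _ ↦ (Real.exp_pos _).le
  simp [facetEnergy_eq_zero hl hnl]

theorem exp_mul_facetEnergy_le {ν : ℝ} (hν : ν ≤ 0) {i j : ι} (hij : i ≠ j) (S : Finset ι)
    (n : ι → ℕ) :
    Real.exp (ν * facetEnergy S n) ≤ Set.indicator {n | ∃ l ∉ S, n l = 0} 1 n +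
      Real.exp ν ^ (max 1 (n i) * max 1 (n j)) := by
  by_cases hn : n ∈ {n : ι → ℕ | ∃ l ∉ S, n l = 0}
  · rw [Set.indicator_of_mem hn]
    exact (exp_mul_facetEnergy_mem_Icc hν S n).2.trans (le_add_of_nonneg_right (by positivity))
  · rw [Set.indicator_of_notMem hn, zero_add, ← Real.exp_nat_mul, mul_comm _ ν]
    have hpos : ∀ l ∉ S, n l ≠ 0 := fun l hl hnl ↦ hn ⟨l, hl, hnl⟩
    gcongr Real.exp ?_
    exact mul_le_mul_of_nonpos_left (max_one_mul_max_one_le_facetEnergy hij hpos) hν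

end FacetEnergy

theorem pow_max_one_mul_max_one_le {q : ℝ} (hq0 : 0 ≤ q) (hq1 : q ≤ 1) (M m l : ℕ) :
    q ^ (max 1 m * max 1 l) ≤ (Set.Iio (2 * M)).indicator 1 m * q ^ l +
      (Set.Iio (2 * M)).indicator 1 l * q ^ m + (q ^ M) ^ m * (q ^ M) ^ l := by
  have hm_small_nonneg : 0 ≤ (Set.Iio (2 * M)).indicator (1 : ℕ → ℝ) m * q ^ l :=
    mul_nonneg (Set.indicator_nonneg (fun _ _ ↦ zero_le_one) m) (by positivity)
  have hl_small_nonneg : 0 ≤ (Set.Iio (2 * M)).indicator (1 : ℕ → ℝ) l * q ^ m :=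
    mul_nonneg (Set.indicator_nonneg (fun _ _ ↦ zero_le_one) l) (by positivity)
  have hlarge_nonneg : 0 ≤ (q ^ M) ^ m * (q ^ M) ^ l := by positivity
  rcases lt_or_ge m (2 * M) with hm | hm
  · have : q ^ (max 1 m * max 1 l) ≤ q ^ l := pow_le_pow_of_le_one hq0 hq1 <|
      (le_max_right 1 l).trans (Nat.le_mul_of_pos_left _ (by positivity))
    rw [Set.indicator_of_mem (Set.mem_Iio.2 hm), Pi.one_apply, one_mul]
    linarith
  rcases lt_or_ge l (2 * M) with hl | hl
  · have : q ^ (max 1 m * max 1 l) ≤ q ^ m := pow_le_pow_of_le_one hq0 hq1 <|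
      (le_max_right 1 m).trans (Nat.le_mul_of_pos_right _ (by positivity))
    rw [Set.indicator_of_mem (Set.mem_Iio.2 hl), Pi.one_apply, one_mul]
    linarith
  · have hexp : M * m + M * l ≤ max 1 m * max 1 l := calc
      M * m + M * l ≤ m * l := by nlinarith
      _ ≤ max 1 m * max 1 l := by gcongr <;> exact le_max_right _ _
    have : q ^ (max 1 m * max 1 l) ≤ (q ^ M) ^ m * (q ^ M) ^ l := by
      simpa only [← pow_mul, ← pow_add] using pow_le_pow_of_le_one hq0 hq1 hexp
    linarith

section Poisson

open MeasureTheory ProbabilityTheory Topology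
open scoped NNReal Nat

theorem integral_pow_poissonMeasure (r : ℝ≥0) (q : ℝ) :
    ∫ n, q ^ n ∂poissonMeasure r = Real.exp (-(1 - q) * r) := by
  have hexp := (NormedSpace.expSeries_div_hasSum_exp (r * q)).mul_left (Real.exp (-r))
  rw [← Real.exp_eq_exp_ℝ, ← Real.exp_add] at hexp
  rw [integral_poissonMeasure, show -(1 - q) * r = -r + r * q by ring, ← hexp.tsum_eq]
  congr with n
  rw [smul_eq_mul, mul_pow]
  ring

theorem poissonMeasure_real_Iio (r : ℝ≥0) (M : ℕ) :
    (poissonMeasure r).real (Set.Iio M) =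
      Real.exp (-r) * ∑ m ∈ Finset.range M, (r : ℝ) ^ m / m ! := by
  rw [← Finset.coe_range, ← sum_measureReal_singleton, Finset.mul_sum]
  simp only [poissonMeasure_real_singleton, mul_div_assoc]

theorem poissonMeasure_real_compl_singleton_zero (r : ℝ≥0) :
    (poissonMeasure r).real {0}ᶜ = 1 - Real.exp (-r) := by
  simp [probReal_compl_eq_one_sub, poissonMeasure_real_singleton]

theorem integral_pi_mul_eval {ι : Type*} [Fintype ι] {X : ι → Type*} [∀ i, MeasurableSpace (X i)]
    {μ : ∀ i, Measure (X i)} [∀ i, IsProbabilityMeasure (μ i)] {i j : ι} (hij : i ≠ j)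
    {𝕜 : Type*} [RCLike 𝕜] {f : X i → 𝕜} {g : X j → 𝕜} (hf : Measurable f) (hg : Measurable g) :
    ∫ x, f (x i) * g (x j) ∂Measure.pi μ = (∫ x, f x ∂μ i) * ∫ y, g y ∂μ j := by
  have hindep := ((iIndepFun_pi (μ := μ) fun _ ↦ aemeasurable_id).indepFun hij).comp hf hg
  rw [← integral_comp_eval hf.aestronglyMeasurable, ← integral_comp_eval hg.aestronglyMeasurable]
  exact hindep.integral_fun_mul_eq_mul_integral
    (hf.comp (measurable_pi_apply i)).aestronglyMeasurable
    (hg.comp (measurable_pi_apply j)).aestronglyMeasurable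

/-- The joint law of independent Poisson variables of rate `r` indexed by `ι`. -/
noncomputable abbrev poissonPi (ι : Type*) [Fintype ι] (r : ℝ≥0) : Measure (ι → ℕ) :=
  Measure.pi fun _ ↦ poissonMeasure r

variable {ι : Type*} [Fintype ι]

theorem poissonPi_real_singleton (r : ℝ≥0) (n : ι → ℕ) :
    (poissonPi ι r).real {n} =
      Real.exp (-(Fintype.card ι * r)) * ∏ i, (r : ℝ) ^ n i / (n i)! := by
  simp only [measureReal_def, Measure.pi_singleton, ENNReal.toReal_prod]
  simp only [← measureReal_def, poissonMeasure_real_singleton, mul_div_assoc,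
    Finset.prod_mul_distrib, Finset.prod_const, Finset.card_univ, ← Real.exp_nat_mul, mul_neg]

theorem integral_poissonPi {r : ℝ≥0} {f : (ι → ℕ) → ℝ} (hf : Integrable f (poissonPi ι r)) :
    ∫ n, f n ∂poissonPi ι r = Real.exp (-(Fintype.card ι * r)) *
      ∑' n : ι → ℕ, (∏ i, (r : ℝ) ^ n i / (n i)!) * f n := by
  simp only [integral_countable hf, poissonPi_real_singleton, smul_eq_mul, mul_assoc, tsum_mul_left]

theorem poissonPi_real_exists_eq_zero [DecidableEq ι] (S : Finset ι) (r : ℝ≥0) :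
    (poissonPi ι r).real {n | ∃ l ∉ S, n l = 0} = 1 - (1 - Real.exp (-r)) ^ Sᶜ.card := by
  have hset : {n : ι → ℕ | ∃ l ∉ S, n l = 0} = (((Sᶜ : Finset ι) : Set ι).pi fun _ ↦ {0}ᶜ)ᶜ := by
    ext n
    simp [Set.mem_pi]
  rw [hset, probReal_compl_eq_one_sub .of_discrete, measureReal_def, Measure.pi_pi_finset,
    Finset.prod_const, ENNReal.toReal_pow, ← measureReal_def,
    poissonMeasure_real_compl_singleton_zero]

theorem integrable_of_mem_Icc_zero_one {r : ℝ≥0} {f : (ι → ℕ) → ℝ}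
    (hf : ∀ n, f n ∈ Set.Icc 0 1) : Integrable f (poissonPi ι r) :=
  .of_mem_Icc 0 1 Measurable.of_discrete.aemeasurable (.of_forall hf)

theorem tendsto_pow_mul_exp_neg_mul_nnreal {b : ℝ} (hb : 0 < b) (m : ℕ) :
    Tendsto (fun r : ℝ≥0 ↦ (r : ℝ) ^ m * Real.exp (-b * r)) atTop (𝓝 0) := by
  refine ((isLittleO_pow_exp_pos_mul_atTop m hb).tendsto_div_nhds_zero.comp
    (NNReal.tendsto_coe_atTop.2 tendsto_id)).congr fun r ↦ ?_
  simp only [Function.comp_apply, id, neg_mul, Real.exp_neg, div_eq_mul_inv]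

theorem tendsto_exp_mul_one_sub_one_sub_exp_neg_pow (t : ℕ) :
    Tendsto (fun r : ℝ≥0 ↦ Real.exp r * (1 - (1 - Real.exp (-r)) ^ t)) atTop (𝓝 t) := by
  have hbase : Tendsto (fun r : ℝ≥0 ↦ 1 - Real.exp (-(r : ℝ))) atTop (𝓝 1) := by
    simpa using tendsto_const_nhds.sub
      (Real.tendsto_exp_neg_atTop_nhds_zero.comp (NNReal.tendsto_coe_atTop.2 tendsto_id))
  have hgeom : Tendsto (fun r : ℝ≥0 ↦ ∑ i ∈ Finset.range t, (1 - Real.exp (-(r : ℝ))) ^ i) atTop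
      (𝓝 t) := by
    simpa using tendsto_finsetSum (Finset.range t) fun i _ ↦ hbase.pow i
  refine hgeom.congr fun r ↦ ?_
  rw [← mul_neg_geom_sum, sub_sub_cancel, ← mul_assoc, ← Real.exp_add, add_neg_cancel,
    Real.exp_zero, one_mul]

theorem tendsto_exp_mul_poissonMeasure_Iio_mul_integral_pow {q : ℝ} (hq : q < 1) (M : ℕ) :
    Tendsto (fun r : ℝ≥0 ↦ Real.exp r *
      ((poissonMeasure r).real (Set.Iio M) * ∫ n, q ^ n ∂poissonMeasure r)) atTop (𝓝 0) := by
  have hsum := tendsto_finsetSum (Finset.range M) fun m _ ↦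
    (tendsto_pow_mul_exp_neg_mul_nnreal (sub_pos.2 hq) m).div_const (m ! : ℝ)
  simp only [zero_div, Finset.sum_const_zero] at hsum
  refine hsum.congr fun r ↦ ?_
  rw [poissonMeasure_real_Iio, integral_pow_poissonMeasure, ← mul_assoc, ← mul_assoc,
    ← Real.exp_add, add_neg_cancel, Real.exp_zero, one_mul, Finset.sum_mul]
  exact Finset.sum_congr rfl fun m _ ↦ by ring

theorem tendsto_exp_mul_integral_pow_sq {q : ℝ} (hq : q < 1 / 2) :
    Tendsto (fun r : ℝ≥0 ↦ Real.exp r * ((∫ n, q ^ n ∂poissonMeasure r) *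
      ∫ n, q ^ n ∂poissonMeasure r)) atTop (𝓝 0) := by
  refine (tendsto_pow_mul_exp_neg_mul_nnreal (b := 1 - 2 * q) (by linarith) 0).congr fun r ↦ ?_
  rw [integral_pow_poissonMeasure, ← Real.exp_add, ← Real.exp_add, pow_zero, one_mul]
  ring_nf

theorem integral_pow_max_one_mul_max_one_le {q : ℝ} (hq0 : 0 ≤ q) (hq1 : q ≤ 1) {i j : ι}
    (hij : i ≠ j) (M : ℕ) (r : ℝ≥0) :
    ∫ n, q ^ (max 1 (n i) * max 1 (n j)) ∂poissonPi ι r ≤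
      2 * ((poissonMeasure r).real (Set.Iio (2 * M)) * ∫ n, q ^ n ∂poissonMeasure r) +
        (∫ n, (q ^ M) ^ n ∂poissonMeasure r) * ∫ n, (q ^ M) ^ n ∂poissonMeasure r := by
  have hqM0 : 0 ≤ q ^ M := pow_nonneg hq0 M
  have hqM1 : q ^ M ≤ 1 := pow_le_one₀ hq0 hq1
  have hpow {p : ℝ} (hp0 : 0 ≤ p) (hp1 : p ≤ 1) (m : ℕ) : p ^ m ∈ Set.Icc 0 1 :=
    ⟨pow_nonneg hp0 m, pow_le_one₀ hp0 hp1⟩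
  have hind (m : ℕ) : (Set.Iio (2 * M)).indicator (1 : ℕ → ℝ) m ∈ Set.Icc 0 1 :=
    ⟨Set.indicator_nonneg (fun _ _ ↦ zero_le_one) m,
      Set.indicator_apply_le' (fun _ ↦ le_rfl) fun _ ↦ zero_le_one⟩
  have hint {f g : (ι → ℕ) → ℝ} (hf : ∀ n, f n ∈ Set.Icc 0 1) (hg : ∀ n, g n ∈ Set.Icc 0 1) :
      Integrable (fun n ↦ f n * g n) (poissonPi ι r) :=
    integrable_of_mem_Icc_zero_one fun n ↦ unitInterval.mul_mem (hf n) (hg n)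
  have hint₁ := hint (fun n ↦ hind (n i)) fun n ↦ hpow hq0 hq1 (n j)
  have hint₂ := hint (fun n ↦ hind (n j)) fun n ↦ hpow hq0 hq1 (n i)
  have hint₃ := hint (fun n ↦ hpow hqM0 hqM1 (n i)) fun n ↦ hpow hqM0 hqM1 (n j)
  refine (integral_mono (integrable_of_mem_Icc_zero_one fun n ↦ hpow hq0 hq1 _)
    ((hint₁.add hint₂).add hint₃)
    fun n ↦ pow_max_one_mul_max_one_le hq0 hq1 M (n i) (n j)).trans_eq ?_
  rw [integral_add' (hint₁.add hint₂) hint₃, integral_add' hint₁ hint₂,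
    integral_pi_mul_eval hij .of_discrete .of_discrete,
    integral_pi_mul_eval hij.symm .of_discrete .of_discrete,
    integral_pi_mul_eval hij .of_discrete .of_discrete, integral_indicator_one measurableSet_Iio,
    ← two_mul]

theorem tendsto_exp_mul_integral_pow_max_one_mul_max_one {q : ℝ} (hq0 : 0 ≤ q) (hq1 : q < 1)
    {i j : ι} (hij : i ≠ j) :
    Tendsto (fun r : ℝ≥0 ↦ Real.exp r *
      ∫ n, q ^ (max 1 (n i) * max 1 (n j)) ∂poissonPi ι r) atTop (𝓝 0) := by
  obtain ⟨M, hM⟩ := exists_pow_lt_of_lt_one (one_half_pos (α := ℝ)) hq1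
  have hbound := ((tendsto_exp_mul_poissonMeasure_Iio_mul_integral_pow hq1 (2 * M)).const_mul
    2).add (tendsto_exp_mul_integral_pow_sq hM)
  rw [mul_zero, add_zero] at hbound
  refine squeeze_zero (fun r ↦ by positivity) (fun r ↦ ?_) hbound
  rw [mul_left_comm, ← mul_add]
  gcongr
  exact integral_pow_max_one_mul_max_one_le hq0 hq1.le hij M r

theorem integrable_exp_mul_facetEnergy [DecidableEq ι] {r : ℝ≥0} {ν : ℝ} (hν : ν ≤ 0)
    (S : Finset ι) : Integrable (fun n ↦ Real.exp (ν * facetEnergy S n)) (poissonPi ι r) :=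
  integrable_of_mem_Icc_zero_one (exp_mul_facetEnergy_mem_Icc hν S)

theorem tendsto_exp_mul_integral_exp_facetEnergy [DecidableEq ι] [Nontrivial ι] (S : Finset ι)
    {ν : ℝ} (hν : ν < 0) :
    Tendsto (fun r : ℝ≥0 ↦ Real.exp r * ∫ n, Real.exp (ν * facetEnergy S n) ∂poissonPi ι r) atTop
      (𝓝 Sᶜ.card) := by
  obtain ⟨i, j, hij⟩ := exists_pair_ne ι
  set A : Set (ι → ℕ) := {n | ∃ l ∉ S, n l = 0}
  have hmain : Tendsto (fun r : ℝ≥0 ↦ Real.exp r * (poissonPi ι r).real A) atTop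
      (𝓝 Sᶜ.card) := by
    simpa only [A, poissonPi_real_exists_eq_zero]
      using tendsto_exp_mul_one_sub_one_sub_exp_neg_pow Sᶜ.card
  have hrem := tendsto_exp_mul_integral_pow_max_one_mul_max_one (Real.exp_pos ν).le
    (Real.exp_lt_one_iff.2 hν) hij
  have hupper := hmain.add hrem
  rw [add_zero] at hupper
  have hA (r : ℝ≥0) : Integrable (A.indicator (1 : (ι → ℕ) → ℝ)) (poissonPi ι r) :=
    (integrable_const 1).indicator .of_discrete
  have hexp (r : ℝ≥0) := integrable_exp_mul_facetEnergy (r := r) hν.le S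
  have hpow (r : ℝ≥0) : Integrable (fun n ↦ Real.exp ν ^ (max 1 (n i) * max 1 (n j)))
      (poissonPi ι r) :=
    integrable_of_mem_Icc_zero_one fun n ↦
      ⟨by positivity, pow_le_one₀ (Real.exp_pos ν).le (Real.exp_lt_one_iff.2 hν).le⟩
  refine tendsto_of_tendsto_of_tendsto_of_le_of_le hmain hupper (fun r ↦ ?_) fun r ↦ ?_
  · beta_reduce
    rw [← integral_indicator_one .of_discrete]
    exact mul_le_mul_of_nonneg_left
      (integral_mono (hA r) (hexp r) (indicator_le_exp_mul_facetEnergy ν S)) (Real.exp_pos r).le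
  · beta_reduce
    rw [← integral_indicator_one .of_discrete, ← mul_add, ← integral_add (hA r) (hpow r)]
    exact mul_le_mul_of_nonneg_left (integral_mono (hexp r) ((hA r).add (hpow r))
      (exp_mul_facetEnergy_le hν.le hij S)) (Real.exp_pos r).le

theorem correlation_function_ratio_limit_general [DecidableEq ι] [Nontrivial ι] (S : Finset ι)
    {ν : ℝ} (hν : ν < 0) :
    Tendsto (fun a : ℝ ↦
        (∑' n : ι → ℕ, (∏ i, a ^ n i / (n i)!) * Real.exp (ν * facetEnergy S n)) /
          ∑' n : ι → ℕ, (∏ i, a ^ n i / (n i)!) * Real.exp (ν * ∏ i, (n i : ℝ)))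
      atTop (𝓝 (Sᶜ.card / Fintype.card ι)) := by
  rw [← NNReal.map_coe_atTop, tendsto_map'_iff]
  have hnum := tendsto_exp_mul_integral_exp_facetEnergy S hν
  have hden := tendsto_exp_mul_integral_exp_facetEnergy (∅ : Finset ι) hν
  rw [Finset.compl_empty, Finset.card_univ] at hden
  refine (hnum.div hden (Nat.cast_ne_zero.2 Fintype.card_ne_zero)).congr fun r ↦ ?_
  simp only [Pi.div_apply, Function.comp_apply, ← facetEnergy_empty]
  rw [mul_div_mul_left _ _ (Real.exp_ne_zero _),
    integral_poissonPi (integrable_exp_mul_facetEnergy hν.le S),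
    integral_poissonPi (integrable_exp_mul_facetEnergy hν.le ∅),
    mul_div_mul_left _ _ (Real.exp_ne_zero _)]

end Poisson

theorem card_compl_filter_val_lt {d k : ℕ} (hk : k ≤ d) :
    (Finset.univ.filter fun i : Fin d ↦ (i : ℕ) < d - k)ᶜ.card = k := by
  rw [Finset.card_compl, Fintype.card_fin, Fin.card_filter_val_lt]
  omega

/-- The ratio of the `Q_{d-k,d}` series to the `n_1⋯n_d` series tends to `k/d`;
series form of the limit of the correlation function `ρ_{d-k}(·;μ_a^{(d)}) → k/d`. -/
theorem correlation_function_ratio_limit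
    (d k : ℕ) (hd : 3 ≤ d) (hk1 : 1 ≤ k) (hk2 : k ≤ d - 1) (ν : ℝ) (hν : ν < 0) :
    Tendsto (fun a : ℝ =>
        (∑' n : Fin d → ℕ,
            (∏ i, a ^ (n i) / ((n i).factorial : ℝ)) *
              Real.exp (ν *
                ∑ F ∈ (Finset.univ.filter (fun i : Fin d => (i : ℕ) < d - k)).powerset,
                  ∏ l ∈ Finset.univ \ F, (n l : ℝ))) /
          (∑' n : Fin d → ℕ,
            (∏ i, a ^ (n i) / ((n i).factorial : ℝ)) * Real.exp (ν * ∏ i, (n i : ℝ))))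
      atTop (nhds ((k : ℝ) / d)) := by
  have : Nontrivial (Fin d) := Fin.nontrivial_iff_two_le.2 (by omega)
  simpa only [facetEnergy, card_compl_filter_val_lt (hk2.trans d.pred_le), Fintype.card_fin] using
    correlation_function_ratio_limit_general {i : Fin d | (i : ℕ) < d - k} hν
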